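/- (Lemma 3) Fix vehicle length l > 0 and uncertainty parameter σₒ > 0. If two speed–headway pairs (v₁,η₁) and (v₂,η₂) with v₁, v₂, η₁, η₂ > 0 yield the same collision probability, p(v₁,η₁) = p(v₂,η₂), and v₁ < v₂, then η₁ > η₂; that is, along a level set of the collision probability, an increase in speed forces a decrease in headway. -/

import Mathlib

open MeasureTheory Real Filter Set

/-- The standard Gaussian probability density function. -/
noncomputable def stdGaussianPDF (x : ℝ) : ℝ :=
  (Real.sqrt (2 * Real.pi))⁻¹ * Real.exp (-x ^ 2 / 2)

/-- The standard Gaussian cumulative distribution function Φ. -/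
noncomputable def stdGaussianCDF (x : ℝ) : ℝ :=
  ∫ t in Set.Iic x, stdGaussianPDF t

/-- The per-time-step collision probability p(v,η) = Φ((l − v·η)/(v·σₒ·√η)). -/
noncomputable def collisionProb (l σₒ v η : ℝ) : ℝ :=
  stdGaussianCDF ((l - v * η) / (v * σₒ * Real.sqrt η))

theorem strictMono_integral_Iic {f : ℝ → ℝ} (hf : ∀ x, IntegrableOn f (Iic x))
    (hpos : ∀ x, 0 < f x) : StrictMono fun x => ∫ t in Iic x, f t := by
  intro x y hxy
  have hint : IntervalIntegrable f volume x y :=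
    (intervalIntegrable_iff_integrableOn_Ioc_of_le hxy.le).2 ((hf y).mono_set Ioc_subset_Iic_self)
  rw [← sub_pos, intervalIntegral.integral_Iic_sub_Iic (hf x) (hf y)]
  exact intervalIntegral.intervalIntegral_pos_of_pos hint hpos hxy

theorem stdGaussianPDF_eq_gaussianPDFReal :
    stdGaussianPDF = ProbabilityTheory.gaussianPDFReal 0 1 := by
  ext x
  simp [stdGaussianPDF, ProbabilityTheory.gaussianPDFReal]

theorem stdGaussianCDF_strictMono : StrictMono stdGaussianCDF := by
  change StrictMono fun x => ∫ t in Iic x, stdGaussianPDF t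
  rw [stdGaussianPDF_eq_gaussianPDFReal]
  exact strictMono_integral_Iic
    (fun _ => (ProbabilityTheory.integrable_gaussianPDFReal 0 1).integrableOn)
    (fun x => ProbabilityTheory.gaussianPDFReal_pos 0 1 x one_ne_zero)

section CollisionProb

variable {l σₒ v η : ℝ}

/-- In this form the argument of `Φ` is visibly decreasing in `v` and in `η` separately. -/
theorem collisionProb_eq_stdGaussianCDF (hv : v ≠ 0) (hη : 0 < η) :
    collisionProb l σₒ v η = stdGaussianCDF ((l / (v * √η) - √η) / σₒ) := by
  have hsqrt : √η ≠ 0 := (sqrt_pos.2 hη).ne'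
  have hnum : l / (v * √η) - √η = (l - v * η) / (v * √η) := by
    rw [div_sub' (mul_ne_zero hv hsqrt), mul_assoc, mul_self_sqrt hη.le]
  rw [collisionProb, hnum, div_div, mul_right_comm]

theorem collisionProb_strictAntiOn_speed (hl : 0 < l) (hσ : 0 < σₒ) (hη : 0 < η) :
    StrictAntiOn (fun v => collisionProb l σₒ v η) (Ioi 0) := by
  intro v (hv : 0 < v) w (hw : 0 < w) hvw
  simp only [collisionProb_eq_stdGaussianCDF hv.ne' hη, collisionProb_eq_stdGaussianCDF hw.ne' hη]
  apply stdGaussianCDF_strictMono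
  gcongr

theorem collisionProb_strictAntiOn_headway (hl : 0 ≤ l) (hσ : 0 < σₒ) (hv : 0 < v) :
    StrictAntiOn (collisionProb l σₒ v) (Ioi 0) := by
  intro η (hη : 0 < η) θ (hθ : 0 < θ) hηθ
  simp only [collisionProb_eq_stdGaussianCDF hv.ne' hη, collisionProb_eq_stdGaussianCDF hv.ne' hθ]
  have hsqrt : √η < √θ := sqrt_lt_sqrt hη.le hηθ
  have hratio : l / (v * √θ) ≤ l / (v * √η) := by gcongr
  have hsub : l / (v * √θ) - √θ < l / (v * √η) - √η := by linarith
  exact stdGaussianCDF_strictMono (div_lt_div_of_pos_right hsub hσ)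

end CollisionProb

/-- Lemma 3: along a level set of the collision probability, an
increase in speed forces a decrease in headway. -/
theorem headway_decreases_with_speed_on_level_set (l σₒ v₁ v₂ η₁ η₂ : ℝ)
    (hl : 0 < l) (hσ : 0 < σₒ)
    (hv₁ : 0 < v₁) (hv₂ : 0 < v₂) (hη₁ : 0 < η₁) (hη₂ : 0 < η₂)
    (hlevel : collisionProb l σₒ v₁ η₁ = collisionProb l σₒ v₂ η₂)
    (hv : v₁ < v₂) :
    η₂ < η₁ := by
  by_contra! hη
  have hlt : collisionProb l σₒ v₂ η₂ < collisionProb l σₒ v₁ η₁ :=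
    calc collisionProb l σₒ v₂ η₂
      _ ≤ collisionProb l σₒ v₂ η₁ :=
        (collisionProb_strictAntiOn_headway hl.le hσ hv₂).antitoneOn hη₁ hη₂ hη
      _ < collisionProb l σₒ v₁ η₁ :=
        collisionProb_strictAntiOn_speed hl hσ hη₁ hv₁ hv₂ hv
  exact hlt.ne' hlevel
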